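/- For every integer k ≥ 2, there exists a natural number n with 2·n ≤ 3·⌊log₂ k⌋ + 2 and a topological space on a set of n points having exactly k open sets. (Equivalently, m(k) ≤ (3/2)·⌊log₂ k⌋ + 1.) -/

import Mathlib

/-!
Adjoin a point to a space so that its open neighbourhoods are required to contain a given set `C`.
The new open sets avoiding the point are the old open sets, and those containing it correspond to
the old open supersets of `C`. Hence the number `k` of open sets is doubled by `C = ∅`, increased by
`1` by `C = univ`, and increased by `d` if `C` has exactly `d` open supersets.

A set with exactly `3` open supersets is carried along. It survives doubling and adding `3`, and
after any doubling followed by adding `1` the set of all old points is one: the new points can be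
joined to it in three ways. Appending two binary digits to `k` then costs at most three points: the
digits `00`, `01`, `10` are produced by doubling twice, with an addition of `1` at the right moment
for the latter two, and `11` by doubling twice and adding `3`. Such sets exist from `k = 3` on, so
the recursion `k ↦ k / 4` stops at `3 ≤ k < 12`.
-/

open Set Topology

section Adjoin

variable {X : Type*} (t : TopologicalSpace X) (C D s : Set X)

/-- The family of open sets of the topology `t` that contain `D`; for `D = ∅`, all open sets. -/
def openSupersets : Set (Set X) := {s | IsOpen[t] s ∧ D ⊆ s}

/-- The topology on `X` with one further point `none`, in which an open set may contain `none` only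
if it contains `C`. -/
abbrev adjoinPoint : TopologicalSpace (Option X) where
  IsOpen S := IsOpen[t] (some ⁻¹' S) ∧ (none ∈ S → C ⊆ some ⁻¹' S)
  isOpen_univ := ⟨t.isOpen_univ, fun _ ↦ subset_univ _⟩
  isOpen_inter S T hS hT :=
    ⟨t.isOpen_inter _ _ hS.1 hT.1, fun h ↦ subset_inter (hS.2 h.1) (hT.2 h.2)⟩
  isOpen_sUnion 𝒮 h𝒮 := by
    refine ⟨?_, fun ⟨S, hS, hnone⟩ ↦ ?_⟩
    · rw [preimage_sUnion]
      exact isOpen_biUnion fun S hS ↦ (h𝒮 S hS).1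
    · exact ((h𝒮 S hS).2 hnone).trans (preimage_mono (subset_sUnion_of_mem hS))

lemma openSupersets_univ : openSupersets t univ = {univ} := by
  ext s
  simp +contextual [openSupersets, univ_subset_iff]

lemma some_preimage_insert_none_image_some : some ⁻¹' insert none (some '' s) = s := by
  ext; simp

lemma insert_none_image_some_injective :
    Function.Injective fun s : Set X ↦ insert none (some '' s) :=
  Function.LeftInverse.injective some_preimage_insert_none_image_some

lemma insert_none_ne_image_some (s s' : Set X) : insert none (some '' s) ≠ some '' s' := by
  intro h
  have hmem : none ∈ some '' s' := h ▸ mem_insert none (some '' s)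
  simp at hmem

lemma exists_eq_image_some_or_eq_insert_none (S : Set (Option X)) :
    ∃ s : Set X, S = some '' s ∨ S = insert none (some '' s) := by
  refine ⟨some ⁻¹' S, ?_⟩
  by_cases h : none ∈ S
  · right; ext (_ | x) <;> simp [h]
  · left; ext (_ | x) <;> simp [h]

lemma isOpen_adjoinPoint_image_some : IsOpen[adjoinPoint t C] (some '' s) ↔ IsOpen[t] s := by
  change IsOpen[t] (some ⁻¹' (some '' s)) ∧ _ ↔ _
  simp [preimage_image_eq _ (Option.some_injective X)]

lemma isOpen_adjoinPoint_insert_none :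
    IsOpen[adjoinPoint t C] (insert none (some '' s)) ↔ IsOpen[t] s ∧ C ⊆ s := by
  change IsOpen[t] (some ⁻¹' insert none (some '' s)) ∧ (_ → C ⊆ some ⁻¹' _) ↔ _
  simp [some_preimage_insert_none_image_some]

lemma openSupersets_adjoinPoint_insert_none :
    openSupersets (adjoinPoint t C) (insert none (some '' D)) =
      (fun s ↦ insert none (some '' s)) '' openSupersets t (C ∪ D) := by
  ext S
  obtain ⟨s, rfl | rfl⟩ := exists_eq_image_some_or_eq_insert_none S
  · simp [openSupersets, insert_none_ne_image_some, insert_subset_iff]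
  · rw [insert_none_image_some_injective.mem_set_image]
    simp [openSupersets, isOpen_adjoinPoint_insert_none, and_assoc, insert_subset_iff,
      some_preimage_insert_none_image_some]

lemma openSupersets_adjoinPoint_image_some :
    openSupersets (adjoinPoint t C) (some '' D) =
      image some '' openSupersets t D ∪
        openSupersets (adjoinPoint t C) (insert none (some '' D)) := by
  rw [openSupersets_adjoinPoint_insert_none]
  ext S
  obtain ⟨s, rfl | rfl⟩ := exists_eq_image_some_or_eq_insert_none S
  · rw [mem_union, (image_injective.mpr (Option.some_injective X)).mem_set_image]
    simp [openSupersets, isOpen_adjoinPoint_image_some, insert_none_ne_image_some,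
      preimage_image_eq _ (Option.some_injective X)]
  · rw [mem_union, insert_none_image_some_injective.mem_set_image]
    simp [openSupersets, isOpen_adjoinPoint_insert_none, and_assoc,
      some_preimage_insert_none_image_some, (insert_none_ne_image_some _ _).symm]

lemma encard_openSupersets_adjoinPoint_insert_none :
    (openSupersets (adjoinPoint t C) (insert none (some '' D))).encard =
      (openSupersets t (C ∪ D)).encard := by
  rw [openSupersets_adjoinPoint_insert_none, insert_none_image_some_injective.encard_image]

lemma encard_openSupersets_adjoinPoint_image_some :
    (openSupersets (adjoinPoint t C) (some '' D)).encard =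
      (openSupersets t D).encard + (openSupersets t (C ∪ D)).encard := by
  have hdisj : Disjoint (image some '' openSupersets t D)
      (openSupersets (adjoinPoint t C) (insert none (some '' D))) := by
    rw [disjoint_left]
    rintro _ ⟨s, -, rfl⟩ ⟨-, h⟩
    simpa using h (mem_insert _ _)
  rw [openSupersets_adjoinPoint_image_some, encard_union_eq hdisj,
    encard_openSupersets_adjoinPoint_insert_none,
    (image_injective.mpr (Option.some_injective X)).encard_image]

lemma encard_openSupersets_adjoinPoint_empty :
    (openSupersets (adjoinPoint t C) ∅).encard =
      (openSupersets t ∅).encard + (openSupersets t C).encard := by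
  simpa using encard_openSupersets_adjoinPoint_image_some t C ∅

end Adjoin

/-- Some topology on `n` points has exactly `k` open sets and admits a set with exactly `d` open
supersets. -/
def HasOpenCounts (n k d : ℕ) : Prop :=
  ∃ (X : Type) (_ : Finite X) (t : TopologicalSpace X) (D : Set X),
    Nat.card X = n ∧ (openSupersets t ∅).encard = k ∧ (openSupersets t D).encard = d

namespace HasOpenCounts

variable {n k d : ℕ}

lemma zero_one_one : HasOpenCounts 0 1 1 := by
  have h : (openSupersets (⊤ : TopologicalSpace Empty) ∅).encard = 1 := by
    rw [← univ_eq_empty_iff.mpr inferInstance, openSupersets_univ, encard_singleton]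
  exact ⟨Empty, inferInstance, ⊤, ∅, Nat.card_of_isEmpty, h, h⟩

lemma to_one_right (h : HasOpenCounts n k d) : HasOpenCounts n k 1 := by
  obtain ⟨X, _, t, -, hn, hk, -⟩ := h
  exact ⟨X, inferInstance, t, univ, hn, hk, by simp [openSupersets_univ]⟩

lemma of_adjoinPoint {X : Type} [Finite X] {t : TopologicalSpace X} {C : Set X}
    {D : Set (Option X)} {c : ℕ} (hn : Nat.card X = n) (hk : (openSupersets t ∅).encard = k)
    (hc : (openSupersets t C).encard = c) (hd : (openSupersets (adjoinPoint t C) D).encard = d) :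
    HasOpenCounts (n + 1) (k + c) d := by
  refine ⟨Option X, inferInstance, adjoinPoint t C, D, ?_, ?_, hd⟩
  · rw [Finite.card_option, hn]
  · rw [encard_openSupersets_adjoinPoint_empty, hk, hc, Nat.cast_add]

lemma add_right (h : HasOpenCounts n k d) : HasOpenCounts (n + 1) (k + d) d := by
  obtain ⟨X, _, t, D, hn, hk, hd⟩ := h
  refine of_adjoinPoint (D := insert none (some '' D)) hn hk hd ?_
  rw [encard_openSupersets_adjoinPoint_insert_none, union_self, hd]

lemma add_one_both (h : HasOpenCounts n k d) : HasOpenCounts (n + 1) (k + 1) (d + 1) := by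
  obtain ⟨X, _, t, D, hn, hk, hd⟩ := h
  have huniv : (openSupersets t univ).encard = (1 : ℕ) := by simp [openSupersets_univ]
  refine of_adjoinPoint (D := some '' D) hn hk huniv ?_
  rw [encard_openSupersets_adjoinPoint_image_some, univ_union, hd, huniv, Nat.cast_add]

lemma double (h : HasOpenCounts n k d) : HasOpenCounts (n + 1) (2 * k) d := by
  obtain ⟨X, _, t, D, hn, hk, hd⟩ := h
  rw [two_mul]
  refine of_adjoinPoint (D := insert none (some '' D)) hn hk hk ?_
  rw [encard_openSupersets_adjoinPoint_insert_none, empty_union, hd]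

lemma double_both (h : HasOpenCounts n k d) : HasOpenCounts (n + 1) (2 * k) (2 * d) := by
  obtain ⟨X, _, t, D, hn, hk, hd⟩ := h
  rw [two_mul, two_mul]
  refine of_adjoinPoint (D := some '' D) hn hk hk ?_
  rw [encard_openSupersets_adjoinPoint_image_some, empty_union, hd, Nat.cast_add]

lemma double_add_one (h : HasOpenCounts n k d) : HasOpenCounts (n + 2) (2 * k + 1) 3 :=
  h.to_one_right.double_both.add_one_both

lemma exists_four_mul_add (h : HasOpenCounts n k 3) {r : ℕ} (hr : r < 4) :
    ∃ m ≤ n + 3, HasOpenCounts m (4 * k + r) 3 := by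
  interval_cases r
  · exact ⟨n + 2, by lia, by convert h.double.double using 1; ring⟩
  · exact ⟨n + 3, le_rfl, by convert h.double.double_add_one using 1; ring⟩
  · exact ⟨n + 3, le_rfl, by convert h.double_add_one.double using 1; ring⟩
  · exact ⟨n + 3, le_rfl, by convert h.double.double.add_right using 1; ring⟩

lemma exists_of_three_le_of_lt_twelve (hk : 3 ≤ k) (hk' : k < 12) :
    ∃ n, 2 * n ≤ 3 * Nat.log 2 k + 2 ∧ HasOpenCounts n k 3 := by
  have h₂ : HasOpenCounts 1 2 1 := zero_one_one.double
  have h₃ : HasOpenCounts 2 3 3 := zero_one_one.double_add_one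
  have h₄ : HasOpenCounts 3 4 3 := h₂.add_one_both.add_one_both
  have h₅ : HasOpenCounts 3 5 3 := h₂.double_add_one
  interval_cases k
  · exact ⟨2, by norm_num, h₃⟩
  · exact ⟨3, by norm_num, h₄⟩
  · exact ⟨3, by norm_num, h₅⟩
  · exact ⟨3, by norm_num, h₃.double⟩
  · exact ⟨4, by norm_num, h₃.double_add_one⟩
  · exact ⟨4, by norm_num, h₄.double⟩
  · exact ⟨5, by norm_num, h₄.double_add_one⟩
  · exact ⟨4, by norm_num, h₅.double⟩
  · exact ⟨5, by norm_num, h₅.double_add_one⟩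

lemma exists_of_three_le (hk : 3 ≤ k) :
    ∃ n, 2 * n ≤ 3 * Nat.log 2 k + 2 ∧ HasOpenCounts n k 3 := by
  induction k using Nat.strong_induction_on with
  | _ k ih =>
    obtain hk' | hk' := lt_or_ge k 12
    · exact exists_of_three_le_of_lt_twelve hk hk'
    obtain ⟨n, hn, h⟩ := ih (k / 4) (by lia) (by lia)
    obtain ⟨m, hm, h'⟩ := h.exists_four_mul_add (Nat.mod_lt k four_pos)
    have hlog : Nat.log 2 (k / 4) = Nat.log 2 k - 2 := Nat.log_div_base_pow 2 k 2
    have hlog_two : 2 ≤ Nat.log 2 k := Nat.le_log_of_pow_le one_lt_two (by lia)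
    exact ⟨m, by lia, by rwa [Nat.div_add_mod] at h'⟩

lemma exists_topologicalSpace_fin (h : HasOpenCounts n k d) :
    ∃ t : TopologicalSpace (Fin n), Nat.card {s : Set (Fin n) // t.IsOpen s} = k := by
  obtain ⟨X, _, t, -, rfl, hk, -⟩ := h
  let e : X ≃ Fin (Nat.card X) := Finite.equivFin X
  refine ⟨t.coinduced e, ?_⟩
  have hopen (s : Set (Fin (Nat.card X))) :
      (t.coinduced e).IsOpen s ↔ t.IsOpen (Equiv.Set.congr e.symm s) := by
    rw [Equiv.Set.congr_apply, e.image_symm_eq_preimage]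
    rfl
  calc Nat.card {s // (t.coinduced e).IsOpen s}
      = Nat.card {s // t.IsOpen s} :=
        Nat.card_congr ((Equiv.Set.congr e.symm).subtypeEquiv hopen)
    _ = (openSupersets t ∅).ncard := by
        simp only [openSupersets, empty_subset, and_true]
        rfl
    _ = k := by rw [ncard, hk, ENat.toNat_natCast]

end HasOpenCounts

/-- For every integer `k ≥ 2`, there exists a natural number `n` with
`2 * n ≤ 3 * ⌊log₂ k⌋ + 2` and a topology on a set of `n` points having
exactly `k` open sets. -/
theorem m_le_three_halves_log (k : ℕ) (hk : 2 ≤ k) :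
    ∃ n : ℕ, 2 * n ≤ 3 * Nat.log 2 k + 2 ∧
      ∃ t : TopologicalSpace (Fin n), Nat.card {s : Set (Fin n) // t.IsOpen s} = k := by
  obtain rfl | hk := hk.eq_or_lt
  · exact ⟨1, by norm_num, HasOpenCounts.zero_one_one.double.exists_topologicalSpace_fin⟩
  · obtain ⟨n, hn, h⟩ := HasOpenCounts.exists_of_three_le hk
    exact ⟨n, hn, h.exists_topologicalSpace_fin⟩
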